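/- Let r ≥ 1 and let λ̄ = (λ^{(1)},…,λ^{(r)}) be a sequence of partitions in P_n. Then a_ρ(x)·s_λ̄(x|y) = Σ_{T ∈ B_λ̄} c_T(y) · a_{ρ+ω(T)}(x), the sum over all barred skew tableaux of shape λ̄. -/

import Mathlib

open Finset MvPolynomial

attribute [local instance] Classical.propDecidable

/-- A partition in `P_n`: a weakly decreasing sequence of naturals. -/
def IsPartition {n : ℕ} (lam : Fin n → ℕ) : Prop := Antitone lam

/-- The cells of the Young diagram of `lam`, as pairs (row, column), 0-based. -/
noncomputable def cells {n : ℕ} (lam : Fin n → ℕ) : Finset (Fin n × ℕ) :=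
  (Finset.univ ×ˢ Finset.range (Finset.univ.sup lam)).filter fun c => c.2 < lam c.1

/-- Semistandardness for a filling with values in `Fin n` (0-based values):
rows weakly increase, columns strictly increase. -/
def IsSSYT {n : ℕ} (lam : Fin n → ℕ) (T : cells lam → Fin n) : Prop :=
  (∀ c d : cells lam, (c : Fin n × ℕ).1 = (d : Fin n × ℕ).1 →
      (c : Fin n × ℕ).2 ≤ (d : Fin n × ℕ).2 → T c ≤ T d) ∧
  (∀ c d : cells lam, (c : Fin n × ℕ).2 = (d : Fin n × ℕ).2 →
      (c : Fin n × ℕ).1 < (d : Fin n × ℕ).1 → T c < T d)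

/-- The y-subscript `a + c(a) - r(a)` of a cell (1-based value and coordinates). -/
def ysub {n : ℕ} (a : Fin n) (c : Fin n × ℕ) : ℤ := (a : ℤ) + 1 + (c.2 : ℤ) - ((c.1 : ℕ) : ℤ)

/-- The Schur polynomial `s_lam(x)`, in the ring with `x`-variables `Sum.inl i`
and `y`-variables `Sum.inr (i, k)` (family `i`, subscript `k`). -/
noncomputable def schur (n r : ℕ) (lam : Fin n → ℕ) :
    MvPolynomial (Fin n ⊕ Fin r × ℤ) ℤ :=
  ∑ T ∈ Finset.univ.filter (IsSSYT lam), ∏ c : cells lam, X (Sum.inl (T c))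

/-- The factorial Schur polynomial `s_lam(x | y^{(i)})`. -/
noncomputable def factSchur (n r : ℕ) (i : Fin r) (lam : Fin n → ℕ) :
    MvPolynomial (Fin n ⊕ Fin r × ℤ) ℤ :=
  ∑ T ∈ Finset.univ.filter (IsSSYT lam),
    ∏ c : cells lam,
      (X (Sum.inl (T c)) + X (Sum.inr (i, ysub (T c) (c : Fin n × ℕ))))

/-- A barred filling of a single Young diagram: an entry is a value in `Fin n`
(0-based) together with a `Bool` recording whether it is barred.  Rows weakly
increase and columns strictly increase in value, disregarding bars. -/
def IsBarred {n : ℕ} (lam : Fin n → ℕ) (T : cells lam → Fin n × Bool) : Prop :=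
  (∀ c d : cells lam, (c : Fin n × ℕ).1 = (d : Fin n × ℕ).1 →
      (c : Fin n × ℕ).2 ≤ (d : Fin n × ℕ).2 → (T c).1 ≤ (T d).1) ∧
  (∀ c d : cells lam, (c : Fin n × ℕ).2 = (d : Fin n × ℕ).2 →
      (c : Fin n × ℕ).1 < (d : Fin n × ℕ).1 → (T c).1 < (T d).1)

/-- A barred skew tableau of shape `λ̄ = (lam 0, …, lam (r-1))`: since consecutive
diagrams are placed strictly below and to the left of the preceding one, no two
diagrams share a row or a column, so such a tableau is exactly a tuple of barred
fillings of the individual diagrams. -/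
def IsBarredSkew {n r : ℕ} (lam : Fin r → Fin n → ℕ)
    (T : (i : Fin r) → cells (lam i) → Fin n × Bool) : Prop :=
  ∀ i, IsBarred (lam i) (T i)

/-- Unbarred content of a barred filling of one diagram. -/
noncomputable def content1 {n : ℕ} (lam : Fin n → ℕ) (T : cells lam → Fin n × Bool)
    (k : Fin n) : ℕ :=
  (Finset.univ.filter fun c : cells lam => T c = (k, false)).card

/-- Unbarred content `ω(T)` of a barred skew tableau. -/
noncomputable def contentT {n r : ℕ} (lam : Fin r → Fin n → ℕ)
    (T : (i : Fin r) → cells (lam i) → Fin n × Bool) (k : Fin n) : ℕ :=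
  ∑ i, content1 (lam i) (T i) k

/-- The monomial `c_T(y)` contributed by the barred entries of one diagram
(living in the ring of `y`-variables only). -/
noncomputable def cT1 {n : ℕ} (r : ℕ) (i : Fin r) (lam : Fin n → ℕ)
    (T : cells lam → Fin n × Bool) : MvPolynomial (Fin r × ℤ) ℤ :=
  ∏ c ∈ Finset.univ.filter (fun c : cells lam => (T c).2 = true),
    X (i, ysub (T c).1 (c : Fin n × ℕ))

/-- The monomial `c_T(y)` of a barred skew tableau. -/
noncomputable def cT {n r : ℕ} (lam : Fin r → Fin n → ℕ)
    (T : (i : Fin r) → cells (lam i) → Fin n × Bool) : MvPolynomial (Fin r × ℤ) ℤ :=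
  ∏ i, cT1 r i (lam i) (T i)

/-- The unbarred column word of a barred filling of one diagram: unbarred values
(0-based) read down each column, from the rightmost column to the leftmost. -/
noncomputable def colWord1 {n : ℕ} (lam : Fin n → ℕ)
    (T : cells lam → Fin n × Bool) : List ℕ :=
  ((List.range (Finset.univ.sup lam)).reverse).flatMap fun j =>
    (List.finRange n).filterMap fun i =>
      if h : (i, j) ∈ cells lam then
        (if (T ⟨(i, j), h⟩).2 = false then some ((T ⟨(i, j), h⟩).1 : ℕ) else none)
      else none

/-- The unbarred column word of a barred skew tableau: diagram `lam 0` is the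
rightmost, so its word comes first. -/
noncomputable def colWord {n r : ℕ} (lam : Fin r → Fin n → ℕ)
    (T : (i : Fin r) → cells (lam i) → Fin n × Bool) : List ℕ :=
  (List.finRange r).flatMap fun i => colWord1 (lam i) (T i)

/-- A word (with 0-based values) is Yamanouchi if every initial segment contains
at least as many `k`'s as `(k+1)`'s, for every `k`. -/
def IsYam (w : List ℕ) : Prop :=
  ∀ t k, ((w.take t).count (k + 1)) ≤ (w.take t).count k

/-- The alternant `a_ξ(x) = det[(x_i)^{ξ_j}]`. -/
noncomputable def avand (n r : ℕ) (xi : Fin n → ℕ) :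
    MvPolynomial (Fin n ⊕ Fin r × ℤ) ℤ :=
  Matrix.det (Matrix.of fun i j : Fin n =>
    (X (Sum.inl i) : MvPolynomial (Fin n ⊕ Fin r × ℤ) ℤ) ^ xi j)

/-- `ρ = (n-1, n-2, …, 0)`. -/
def rhoPart (n : ℕ) : Fin n → ℕ := fun i => n - 1 - (i : ℕ)

/-!
For a symmetric polynomial `f = ∑ c_m x ^ m`, expanding `f` in the variables permuted by `σ`
inside the `σ`-term of the alternant gives `a_ξ * f = ∑ c_m a_(ξ + m)`. A barred tableau records
the choice of an `x` or a `y` in each factor of the product defining a factorial Schur polynomial,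
so it remains to show that factorial Schur polynomials are symmetric in `x`.

For symmetry under exchanging `x_p` and `x_(p+1)`, fix everything in a tableau except how the
letters `p` and `p + 1` are distributed over the cells carrying one of them. In a column with two
such cells the letters are forced, and both factors involve the same `y`, so these columns
contribute symmetrically. The remaining cells form one interval per row, filled with `p` up to a
cut and with `p + 1` after it, independently of the other rows; summing over the cut gives a
divided difference of `t ↦ ∏ j, (t + Y j)`, which is symmetric as well.
-/

section RowSums

variable {R : Type*} [CommSemiring R]

/-- The factorial Schur polynomial of a single row of cells in the columns `l, …, r - 1`, filled
with two consecutive letters of weights `x` and `z`. The first letter occupies the columns before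
the cut `v`; passing to the second letter raises the subscript of `Y` by one. -/
def rowSum (Y : ℕ → R) (x z : R) (l r : ℕ) : R :=
  ∑ v ∈ Icc l r, (∏ j ∈ Ico l v, (x + Y j)) * ∏ j ∈ Ico v r, (z + Y (j + 1))

lemma rowSum_succ_right (Y : ℕ → R) (x z : R) {l r : ℕ} (hlr : l ≤ r) :
    rowSum Y x z l (r + 1) =
      rowSum Y x z l r * (z + Y (r + 1)) + ∏ j ∈ Ico l (r + 1), (x + Y j) := by
  rw [rowSum, sum_Icc_succ_top (by omega), Ico_self, prod_empty, mul_one, rowSum, sum_mul]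
  congr 1
  refine sum_congr rfl fun v hv => ?_
  rw [prod_Ico_succ_top (mem_Icc.1 hv).2, mul_assoc]

/-- `rowSum` is the divided difference of `t ↦ ∏ j, (t + Y j)` at `x` and `z`; the negative terms
are moved across so that the identity holds in a semiring. -/
lemma mul_rowSum_add_prod (Y : ℕ → R) (x z : R) {l r : ℕ} (hlr : l ≤ r) :
    x * rowSum Y x z l r + ∏ j ∈ Ico l (r + 1), (z + Y j) =
      z * rowSum Y x z l r + ∏ j ∈ Ico l (r + 1), (x + Y j) := by
  induction r, hlr using Nat.le_induction with
  | base =>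
    simp only [rowSum, Icc_self, sum_singleton, Ico_self, prod_empty, Nat.Ico_succ_singleton,
      prod_singleton]
    ring
  | succ r hlr ih =>
    rw [prod_Ico_succ_top (b := r + 1) (by omega), prod_Ico_succ_top (b := r + 1) (by omega),
      rowSum_succ_right Y x z hlr]
    calc x * (rowSum Y x z l r * (z + Y (r + 1)) + ∏ j ∈ Ico l (r + 1), (x + Y j)) +
          (∏ j ∈ Ico l (r + 1), (z + Y j)) * (z + Y (r + 1))
        = (x * rowSum Y x z l r + ∏ j ∈ Ico l (r + 1), (z + Y j)) * (z + Y (r + 1)) +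
          x * ∏ j ∈ Ico l (r + 1), (x + Y j) := by ring
      _ = _ := by rw [ih]; ring

lemma rowSum_comm (Y : ℕ → R) (x z : R) (l r : ℕ) :
    rowSum Y x z l r = rowSum Y z x l r := by
  rcases lt_or_ge r l with hrl | hlr
  · simp [rowSum, Icc_eq_empty_of_lt hrl]
  induction r, hlr using Nat.le_induction with
  | base => simp [rowSum]
  | succ r hlr ih =>
    rw [rowSum_succ_right Y x z hlr, rowSum_succ_right Y z x hlr, ← ih, mul_add, mul_add,
      add_right_comm, add_right_comm _ _ (∏ j ∈ Ico l (r + 1), (z + Y j)),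
      mul_comm _ z, mul_comm _ x, mul_rowSum_add_prod Y x z hlr]

lemma sum_prod_ite_lt_eq (Y : ℕ → R) (x z : R) {a l r b : ℕ} (hal : a ≤ l) (hrb : r ≤ b) :
    ∑ v ∈ Icc l r, ∏ j ∈ Ico a b, (if j < v then x + Y j else z + Y (j + 1)) =
      (∏ j ∈ Ico a l, (x + Y j)) * rowSum Y x z l r * ∏ j ∈ Ico r b, (z + Y (j + 1)) := by
  rw [rowSum, mul_sum, sum_mul]
  refine sum_congr rfl fun v hv => ?_
  obtain ⟨hlv, hvr⟩ := mem_Icc.1 hv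
  have before_cut : ∏ j ∈ Ico a v, (if j < v then x + Y j else z + Y (j + 1)) =
      ∏ j ∈ Ico a v, (x + Y j) :=
    prod_congr rfl fun j hj => if_pos (mem_Ico.1 hj).2
  have after_cut : ∏ j ∈ Ico v b, (if j < v then x + Y j else z + Y (j + 1)) =
      ∏ j ∈ Ico v b, (z + Y (j + 1)) :=
    prod_congr rfl fun j hj => if_neg (not_lt.2 (mem_Ico.1 hj).1)
  rw [← prod_Ico_consecutive _ (hal.trans hlv) (hvr.trans hrb), before_cut, after_cut,
    ← prod_Ico_consecutive _ hal hlv, ← prod_Ico_consecutive _ hvr hrb]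
  ring

end RowSums

section Strips

/-- The least cut allowed in row `i` of a strip occupying the columns `L i, …, Q i - 1` of each
row `i`: the cells lying above row `i + 1` of the strip must carry the first letter. -/
def cutMin (L Q : ℕ → ℕ) (i : ℕ) : ℕ := max (L i) (Q (i + 1))

/-- The greatest cut allowed in row `i` of a strip occupying the columns `L i, …, Q i - 1` of each
row `i`: the cells lying below row `i - 1` of the strip must carry the second letter. -/
def cutMax (L Q : ℕ → ℕ) : ℕ → ℕ
  | 0 => Q 0
  | i + 1 => min (Q (i + 1)) (L i)

lemma le_cutMin (L Q : ℕ → ℕ) (i : ℕ) : L i ≤ cutMin L Q i := le_max_left _ _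

lemma cutMax_le (L Q : ℕ → ℕ) (i : ℕ) : cutMax L Q i ≤ Q i := by
  cases i with
  | zero => exact le_rfl
  | succ i => exact min_le_left _ _

lemma le_cutMin_of_lt {L Q : ℕ → ℕ} (hQ : Antitone Q) {i k : ℕ} (hik : i < k) :
    Q k ≤ cutMin L Q i :=
  (hQ hik).trans (le_max_right _ _)

lemma cutMax_le_of_lt {L Q : ℕ → ℕ} (hL : Antitone L) {i k : ℕ} (hik : i < k) :
    cutMax L Q k ≤ L i := by
  obtain ⟨k, rfl⟩ := Nat.exists_eq_add_one_of_ne_zero hik.ne_bot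
  exact (min_le_right _ _).trans (hL (Nat.lt_succ_iff.1 hik))

variable {R : Type*} [CommSemiring R]

/-- The generating function of the fillings of a strip with columns `L i, …, Q i - 1` in row
`i < n` by two consecutive letters of weights `x` and `z`, rows weakly increasing and columns
strictly increasing; a cell `(i, j)` carrying the first letter has `y`-subscript `k + j - i`. -/
def stripSum (y : ℤ → R) (k : ℤ) (L Q : ℕ → ℕ) (n : ℕ) (x z : R) : R :=
  ∏ i ∈ range n, ∑ v ∈ Icc (cutMin L Q i) (cutMax L Q i), ∏ j ∈ Ico (L i) (Q i),
    if j < v then x + y (k + (j : ℤ) - i) else z + y (k + ((j + 1 : ℕ) : ℤ) - i)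

/-- The cells forced to carry the second letter lie immediately below those forced to carry the
first one, and moving down while passing to the next letter preserves the `y`-subscript. -/
lemma prod_Ico_cutMax_eq_prod_Ico_cutMin (y : ℤ → R) (k : ℤ) (L Q : ℕ → ℕ) {n : ℕ}
    (hQ : Q n = 0) (z : R) :
    ∏ i ∈ range n, ∏ j ∈ Ico (cutMax L Q i) (Q i), (z + y (k + ((j + 1 : ℕ) : ℤ) - i)) =
      ∏ i ∈ range n, ∏ j ∈ Ico (L i) (cutMin L Q i), (z + y (k + (j : ℤ) - i)) := by
  cases n with
  | zero => simp
  | succ m =>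
    have forced_columns_eq (i : ℕ) :
        Ico (cutMax L Q (i + 1)) (Q (i + 1)) = Ico (L i) (cutMin L Q i) := by
      ext j
      simp only [cutMin, cutMax, mem_Ico]
      omega
    rw [prod_range_succ', prod_range_succ]
    simp only [forced_columns_eq]
    simp only [cutMin, cutMax, hQ, Ico_self, prod_empty, max_eq_left (Nat.zero_le _), mul_one]
    refine prod_congr rfl fun i _ => prod_congr rfl fun j _ => ?_
    congr 2
    push_cast
    ring

lemma stripSum_eq (y : ℤ → R) (k : ℤ) (L Q : ℕ → ℕ) {n : ℕ} (hQ : Q n = 0) (x z : R) :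
    stripSum y k L Q n x z =
      (∏ i ∈ range n, ∏ j ∈ Ico (L i) (cutMin L Q i), (x + y (k + (j : ℤ) - i))) *
      (∏ i ∈ range n,
        rowSum (fun j => y (k + (j : ℤ) - i)) x z (cutMin L Q i) (cutMax L Q i)) *
      ∏ i ∈ range n, ∏ j ∈ Ico (L i) (cutMin L Q i), (z + y (k + (j : ℤ) - i)) := by
  rw [← prod_Ico_cutMax_eq_prod_Ico_cutMin y k L Q hQ z, ← prod_mul_distrib, ← prod_mul_distrib]
  exact prod_congr rfl fun i _ =>
    sum_prod_ite_lt_eq (fun j => y (k + (j : ℤ) - i)) x z (le_cutMin L Q i) (cutMax_le L Q i)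

lemma stripSum_comm (y : ℤ → R) (k : ℤ) (L Q : ℕ → ℕ) {n : ℕ} (hQ : Q n = 0) (x z : R) :
    stripSum y k L Q n x z = stripSum y k L Q n z x := by
  simp only [stripSum_eq y k L Q hQ, rowSum_comm _ x z]
  ring

end Strips

section RowEnds

variable {n : ℕ} {lam : Fin n → ℕ}

lemma mem_cells {c : Fin n × ℕ} : c ∈ cells lam ↔ c.2 < lam c.1 := by
  simp only [cells, mem_filter, mem_product, mem_univ, true_and, mem_range, and_iff_right_iff_imp]
  exact fun h => h.trans_le (le_sup (mem_univ c.1))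

/-- The column in which the entries `< a` of row `i` of `T` end (exclusively). Both `a` and `i`
range over all naturals, so that the neighbours of any row exist; rows `i ≥ n` are empty. -/
noncomputable def rowEnd (T : cells lam → Fin n) (a i : ℕ) : ℕ :=
  (univ.filter fun c : cells lam => (c.1.1 : ℕ) = i ∧ (T c : ℕ) < a).sup fun c => c.1.2 + 1

lemma rowEnd_le_iff {T : cells lam → Fin n} {a i v : ℕ} :
    rowEnd T a i ≤ v ↔ ∀ c, (c.1.1 : ℕ) = i → (T c : ℕ) < a → c.1.2 < v := by
  simp [rowEnd, Finset.sup_le_iff]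

lemma lt_rowEnd {T : cells lam → Fin n} {a : ℕ} {c : cells lam} (hc : (T c : ℕ) < a) :
    c.1.2 < rowEnd T a c.1.1 :=
  rowEnd_le_iff.1 le_rfl c rfl hc

lemma rowEnd_le (T : cells lam → Fin n) (a : ℕ) (i : Fin n) : rowEnd T a i ≤ lam i :=
  rowEnd_le_iff.2 fun c hc _ => by
    rw [← Fin.ext hc]
    exact mem_cells.1 c.2

lemma rowEnd_eq_zero_of_le (T : cells lam → Fin n) (a : ℕ) {i : ℕ} (hi : n ≤ i) :
    rowEnd T a i = 0 :=
  Nat.le_zero.1 <| rowEnd_le_iff.2 fun c hc _ => absurd c.1.1.2 (by omega)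

lemma rowEnd_mono (T : cells lam → Fin n) (i : ℕ) {a b : ℕ} (hab : a ≤ b) :
    rowEnd T a i ≤ rowEnd T b i :=
  rowEnd_le_iff.2 fun _ hci hca => rowEnd_le_iff.1 le_rfl _ hci (hca.trans_le hab)

lemma rowEnd_congr {T S : cells lam → Fin n} {a : ℕ} (h : ∀ c, (T c : ℕ) < a ↔ (S c : ℕ) < a) :
    rowEnd T a = rowEnd S a := by
  funext i
  simp only [rowEnd, h]

lemma rowEnd_eq_of_forall {T : cells lam → Fin n} {a v : ℕ} {i : Fin n} (hv : v ≤ lam i)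
    (h : ∀ c, c.1.1 = i → ((T c : ℕ) < a ↔ c.1.2 < v)) : rowEnd T a i = v := by
  refine le_antisymm (rowEnd_le_iff.2 fun c hci hca => (h c (Fin.ext hci)).1 hca) ?_
  by_contra! hlt
  let c : cells lam := ⟨(i, rowEnd T a i), mem_cells.2 (hlt.trans_le hv)⟩
  exact (lt_rowEnd ((h c rfl).2 hlt)).false

lemma IsSSYT.lt_rowEnd_iff {T : cells lam → Fin n} (hT : IsSSYT lam T) {a : ℕ} {c : cells lam} :
    c.1.2 < rowEnd T a c.1.1 ↔ (T c : ℕ) < a := by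
  refine ⟨fun h => ?_, lt_rowEnd⟩
  by_contra! hca
  refine h.not_ge (rowEnd_le_iff.2 fun d hd hda => ?_)
  by_contra! hcd
  have hTcd : T c ≤ T d := hT.1 c d (Fin.ext hd).symm hcd
  rw [Fin.le_def] at hTcd
  omega

lemma IsSSYT.rowEnd_succ_le {T : cells lam → Fin n} (hT : IsSSYT lam T) (hlam : IsPartition lam)
    (a : ℕ) {i k : ℕ} (hik : i < k) : rowEnd T (a + 1) k ≤ rowEnd T a i := by
  refine rowEnd_le_iff.2 ?_
  rintro d rfl hda
  have hid : (⟨i, hik.trans d.1.1.2⟩ : Fin n) < d.1.1 := Fin.lt_def.2 hik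
  let c : cells lam := ⟨(⟨i, _⟩, d.1.2), mem_cells.2 ((mem_cells.1 d.2).trans_le (hlam hid.le))⟩
  have hTcd : T c < T d := hT.2 c d rfl hid
  rw [Fin.lt_def] at hTcd
  exact lt_rowEnd (c := c) (by omega)

lemma IsSSYT.antitone_rowEnd {T : cells lam → Fin n} (hT : IsSSYT lam T) (hlam : IsPartition lam)
    (a : ℕ) : Antitone (rowEnd T a) := by
  intro i k hik
  rcases hik.eq_or_lt with rfl | hlt
  · exact le_rfl
  · exact (rowEnd_mono T k a.le_succ).trans (hT.rowEnd_succ_le hlam a hlt)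

lemma IsSSYT.rowEnd_mem_Icc {T : cells lam → Fin n} (hT : IsSSYT lam T) (hlam : IsPartition lam)
    (a i : ℕ) :
    rowEnd T (a + 1) i ∈ Icc (cutMin (rowEnd T a) (rowEnd T (a + 2)) i)
      (cutMax (rowEnd T a) (rowEnd T (a + 2)) i) := by
  refine mem_Icc.2 ⟨max_le (rowEnd_mono T i (by omega)) ?_, ?_⟩
  · exact hT.rowEnd_succ_le hlam (a + 1) i.lt_succ_self
  cases i with
  | zero => exact rowEnd_mono T 0 (by omega)
  | succ i =>
    exact le_min (rowEnd_mono T _ (by omega)) (hT.rowEnd_succ_le hlam a i.lt_succ_self)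

lemma prod_cells_filter_eq_prod_Ico {M : Type*} [CommMonoid M] (f : Fin n → ℕ → M)
    (L : Fin n → ℕ) {Q : Fin n → ℕ} (hQ : ∀ i, Q i ≤ lam i) :
    ∏ c ∈ univ.filter (fun c : cells lam => L c.1.1 ≤ c.1.2 ∧ c.1.2 < Q c.1.1), f c.1.1 c.1.2 =
      ∏ i, ∏ j ∈ Ico (L i) (Q i), f i j := by
  rw [prod_sigma']
  refine prod_bij (fun c _ => ⟨c.1.1, c.1.2⟩) ?_ ?_ ?_ ?_
  · intro c hc
    simpa using hc
  · rintro ⟨⟨i, j⟩, _⟩ _ ⟨⟨i', j'⟩, _⟩ _ h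
    simpa using h
  · rintro ⟨i, j⟩ h
    have hij : L i ≤ j ∧ j < Q i := by simpa using h
    exact ⟨⟨(i, j), mem_cells.2 (hij.2.trans_le (hQ i))⟩, by simpa using hij, rfl⟩
  · exact fun _ _ => rfl

end RowEnds

section Recutting

/-- The filling obtained from `T` by replacing every letter `q` by `p`. Tableaux with the same
merged filling differ only in the distribution of the letters `p` and `q`. -/
noncomputable def mergeLetters {α β : Type*} (p q : β) (T : α → β) : α → β :=
  fun c => if T c = q then p else T c

lemma mergeLetters_eq_iff {α β : Type*} {p q : β} {T S : α → β} :
    mergeLetters p q T = mergeLetters p q S ↔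
      ∀ c, T c = S c ∨ ((T c = p ∨ T c = q) ∧ (S c = p ∨ S c = q)) := by
  rw [funext_iff]
  refine forall_congr' fun c => ?_
  simp only [mergeLetters]
  grind

variable {n : ℕ} {lam : Fin n → ℕ} {p q : Fin n} {T S : cells lam → Fin n} {v : Fin n → ℕ}

/-- The filling obtained from `T` by redistributing the letters `p` and `q`: in each row `i` the
cells carrying one of them receive `p` before column `v i` and `q` from there on. -/
noncomputable def recut (p q : Fin n) (T : cells lam → Fin n) (v : Fin n → ℕ) :
    cells lam → Fin n :=
  fun c => if T c = p ∨ T c = q then (if c.1.2 < v c.1.1 then p else q) else T c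

lemma recut_of_mem {c : cells lam} (hc : T c = p ∨ T c = q) :
    recut p q T v c = if c.1.2 < v c.1.1 then p else q :=
  if_pos hc

lemma recut_of_notMem {c : cells lam} (hc : ¬(T c = p ∨ T c = q)) : recut p q T v c = T c :=
  if_neg hc

lemma recut_eq_or {c : cells lam} (hc : T c = p ∨ T c = q) :
    recut p q T v c = p ∨ recut p q T v c = q := by
  rw [recut_of_mem hc]
  split_ifs <;> simp

lemma mergeLetters_recut : mergeLetters p q (recut p q T v) = mergeLetters p q T := by
  refine mergeLetters_eq_iff.2 fun c => ?_
  by_cases hc : T c = p ∨ T c = q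
  · exact Or.inr ⟨recut_eq_or hc, hc⟩
  · exact Or.inl (recut_of_notMem hc)

/-- The box of the cuts `v` for which `recut p q T v` is semistandard, where `q` is the letter
following `p`. -/
noncomputable def cutBox (p : Fin n) (T : cells lam → Fin n) : Finset (Fin n → ℕ) :=
  Fintype.piFinset fun i => Icc (cutMin (rowEnd T p) (rowEnd T (p + 2)) i)
    (cutMax (rowEnd T p) (rowEnd T (p + 2)) i)

lemma mem_cutBox : v ∈ cutBox p T ↔
    ∀ i : Fin n, cutMin (rowEnd T p) (rowEnd T (p + 2)) i ≤ v i ∧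
      v i ≤ cutMax (rowEnd T p) (rowEnd T (p + 2)) i := by
  simp only [cutBox, Fintype.mem_piFinset, mem_Icc]

lemma eq_or_eq_iff_of_val_eq_add_one (hpq : (q : ℕ) = p + 1) (a : Fin n) :
    a = p ∨ a = q ↔ (p : ℕ) ≤ a ∧ (a : ℕ) < p + 2 := by
  simp only [Fin.ext_iff]
  omega

lemma IsSSYT.eq_or_eq_iff (hT : IsSSYT lam T) (hpq : (q : ℕ) = p + 1) {c : cells lam} :
    T c = p ∨ T c = q ↔ rowEnd T p c.1.1 ≤ c.1.2 ∧ c.1.2 < rowEnd T (p + 2) c.1.1 := by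
  rw [eq_or_eq_iff_of_val_eq_add_one hpq, ← not_lt, ← not_lt, hT.lt_rowEnd_iff, hT.lt_rowEnd_iff]

lemma isSSYT_recut (hlam : IsPartition lam) (hT : IsSSYT lam T) (hpq : (q : ℕ) = p + 1)
    (hv : v ∈ cutBox p T) : IsSSYT lam (recut p q T v) := by
  have hmem (c : cells lam) : T c = p ∨ T c = q ↔ (p : ℕ) ≤ T c ∧ (T c : ℕ) < p + 2 :=
    eq_or_eq_iff_of_val_eq_add_one hpq (T c)
  have hval {c : cells lam} (hc : T c = p ∨ T c = q) :
      (p : ℕ) ≤ recut p q T v c ∧ (recut p q T v c : ℕ) < p + 2 :=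
    (eq_or_eq_iff_of_val_eq_add_one hpq _).1 (recut_eq_or hc)
  constructor
  · intro c d hrow hcol
    have hTcd : T c ≤ T d := hT.1 c d hrow hcol
    by_cases hc : T c = p ∨ T c = q <;> by_cases hd : T d = p ∨ T d = q
    · rw [recut_of_mem hc, recut_of_mem hd, hrow, Fin.le_def]
      split_ifs <;> omega
    all_goals grind [recut_of_notMem, Fin.le_def]
  · intro c d hcol hrow
    have hTcd : T c < T d := hT.2 c d hcol hrow
    by_cases hc : T c = p ∨ T c = q <;> by_cases hd : T d = p ∨ T d = q
    · have hc_before : c.1.2 < v c.1.1 :=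
        calc c.1.2 = d.1.2 := hcol
          _ < rowEnd T (p + 2) d.1.1 := ((hT.eq_or_eq_iff hpq).1 hd).2
          _ ≤ cutMin _ _ c.1.1 := le_cutMin_of_lt (hT.antitone_rowEnd hlam _) hrow
          _ ≤ v c.1.1 := (mem_cutBox.1 hv _).1
      have hd_after : v d.1.1 ≤ d.1.2 :=
        calc v d.1.1 ≤ cutMax _ _ d.1.1 := (mem_cutBox.1 hv _).2
          _ ≤ rowEnd T p c.1.1 := cutMax_le_of_lt (hT.antitone_rowEnd hlam _) hrow
          _ ≤ c.1.2 := ((hT.eq_or_eq_iff hpq).1 hc).1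
          _ = d.1.2 := hcol
      rw [recut_of_mem hc, recut_of_mem hd, if_pos hc_before, if_neg hd_after.not_gt, Fin.lt_def]
      omega
    all_goals grind [recut_of_notMem, Fin.lt_def]

lemma rowEnd_recut (hT : IsSSYT lam T) (hpq : (q : ℕ) = p + 1) (hv : v ∈ cutBox p T)
    (i : Fin n) : rowEnd (recut p q T v) (p + 1) i = v i := by
  obtain ⟨hlo, hhi⟩ := mem_cutBox.1 hv i
  replace hlo := (le_cutMin _ _ _).trans hlo
  replace hhi := hhi.trans (cutMax_le _ _ _)
  refine rowEnd_eq_of_forall (hhi.trans (rowEnd_le T _ i)) ?_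
  rintro c rfl
  have lt_p := hT.lt_rowEnd_iff (a := p) (c := c)
  have lt_p_add_two := hT.lt_rowEnd_iff (a := p + 2) (c := c)
  by_cases hc : T c = p ∨ T c = q
  · rw [recut_of_mem hc]
    split_ifs <;> omega
  · rw [recut_of_notMem hc]
    rw [eq_or_eq_iff_of_val_eq_add_one hpq] at hc
    omega

lemma recut_rowEnd (hS : IsSSYT lam S) (hpq : (q : ℕ) = p + 1)
    (h : mergeLetters p q S = mergeLetters p q T) :
    recut p q T (fun i => rowEnd S (p + 1) i) = S := by
  funext c
  have hc := mergeLetters_eq_iff.1 h c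
  simp only [recut, hS.lt_rowEnd_iff]
  grind

lemma cutBox_congr (hpq : (q : ℕ) = p + 1) (h : mergeLetters p q S = mergeLetters p q T) :
    cutBox p S = cutBox p T := by
  have hval (c : cells lam) : ((S c : ℕ) < p ↔ (T c : ℕ) < p) ∧
      ((S c : ℕ) < p + 2 ↔ (T c : ℕ) < p + 2) := by
    have := mergeLetters_eq_iff.1 h c
    simp only [Fin.ext_iff] at this
    omega
  rw [cutBox, rowEnd_congr fun c => (hval c).1, rowEnd_congr fun c => (hval c).2, cutBox]

lemma sum_mergeLetters_eq_sum_cutBox {M : Type*} [AddCommMonoid M] (hlam : IsPartition lam)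
    (hT : IsSSYT lam T) (hpq : (q : ℕ) = p + 1) (f : (cells lam → Fin n) → M) :
    ∑ S ∈ (univ.filter (IsSSYT lam)).filter
        (fun S => mergeLetters p q S = mergeLetters p q T), f S =
      ∑ v ∈ cutBox p T, f (recut p q T v) := by
  symm
  refine sum_nbij' (recut p q T) (fun S i => rowEnd S (p + 1) i) ?_ ?_ ?_ ?_ ?_
  · intro v hv
    simp only [mem_filter, mem_univ, true_and]
    exact ⟨isSSYT_recut hlam hT hpq hv, mergeLetters_recut⟩
  · intro S hS
    simp only [mem_filter, mem_univ, true_and] at hS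
    rw [← cutBox_congr hpq hS.2]
    exact mem_cutBox.2 fun i => mem_Icc.1 (hS.1.rowEnd_mem_Icc hlam p i)
  · exact fun v hv => funext (rowEnd_recut hT hpq hv)
  · intro S hS
    simp only [mem_filter, mem_univ, true_and] at hS
    exact recut_rowEnd hS.1 hpq hS.2
  · exact fun _ _ => rfl

end Recutting

section Symmetry

variable {n : ℕ} {lam : Fin n → ℕ} {R : Type*} [CommSemiring R]

/-- The factorial Schur polynomial `s_lam(x|y)` evaluated at elements `x`, `y` of a commutative
semiring; `factSchur` is the case of polynomial variables. -/
noncomputable def factorialSchur (lam : Fin n → ℕ) (x : Fin n → R) (y : ℤ → R) : R :=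
  ∑ T ∈ univ.filter (IsSSYT lam), ∏ c : cells lam, (x (T c) + y (ysub (T c) c))

lemma prod_recut {p q : Fin n} (hpq : (q : ℕ) = p + 1) {T : cells lam → Fin n}
    (hT : IsSSYT lam T) (v : Fin n → ℕ) (x : Fin n → R) (y : ℤ → R) :
    ∏ c : cells lam, (x (recut p q T v c) + y (ysub (recut p q T v c) c)) =
      (∏ c ∈ univ.filter (fun c => ¬(T c = p ∨ T c = q)), (x (T c) + y (ysub (T c) c))) *
      ∏ i : Fin n, ∏ j ∈ Ico (rowEnd T p i) (rowEnd T (p + 2) i),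
        if j < v i then x p + y ((p : ℤ) + 1 + (j : ℤ) - (i : ℕ))
          else x q + y ((p : ℤ) + 1 + ((j + 1 : ℕ) : ℤ) - (i : ℕ)) := by
  rw [← prod_filter_not_mul_prod_filter univ fun c => T c = p ∨ T c = q]
  congr 1
  · refine prod_congr rfl fun c hc => ?_
    rw [recut_of_notMem (mem_filter.1 hc).2]
  · rw [← prod_cells_filter_eq_prod_Ico (lam := lam) (fun (i : Fin n) (j : ℕ) =>
      if j < v i then x p + y ((p : ℤ) + 1 + (j : ℤ) - (i : ℕ))
        else x q + y ((p : ℤ) + 1 + ((j + 1 : ℕ) : ℤ) - (i : ℕ)))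
      (fun i => rowEnd T p i) (rowEnd_le T (p + 2))]
    refine prod_congr (filter_congr fun c _ => hT.eq_or_eq_iff hpq) fun c hc => ?_
    rw [recut_of_mem ((hT.eq_or_eq_iff hpq).2 (mem_filter.1 hc).2)]
    split_ifs
    · rfl
    · rw [ysub, hpq]
      push_cast
      congr 2
      ring

lemma sum_mergeLetters_eq_mul_stripSum (hlam : IsPartition lam) {p q : Fin n}
    (hpq : (q : ℕ) = p + 1) {T : cells lam → Fin n} (hT : IsSSYT lam T)
    (x : Fin n → R) (y : ℤ → R) :
    ∑ S ∈ (univ.filter (IsSSYT lam)).filter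
        (fun S => mergeLetters p q S = mergeLetters p q T),
        ∏ c : cells lam, (x (S c) + y (ysub (S c) c)) =
      (∏ c ∈ univ.filter (fun c => ¬(T c = p ∨ T c = q)), (x (T c) + y (ysub (T c) c))) *
      stripSum y (p + 1) (rowEnd T p) (rowEnd T (p + 2)) n (x p) (x q) := by
  rw [sum_mergeLetters_eq_sum_cutBox hlam hT hpq, stripSum, prod_range, prod_univ_sum, mul_sum]
  exact sum_congr rfl fun v _ => prod_recut hpq hT v x y

lemma factorialSchur_comp_swap (hlam : IsPartition lam) {p q : Fin n} (hpq : (q : ℕ) = p + 1)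
    (x : Fin n → R) (y : ℤ → R) :
    factorialSchur lam (x ∘ Equiv.swap p q) y = factorialSchur lam x y := by
  rw [factorialSchur, factorialSchur, ← sum_fiberwise (univ.filter (IsSSYT lam)) (mergeLetters p q),
    ← sum_fiberwise (univ.filter (IsSSYT lam)) (mergeLetters p q)]
  refine sum_congr rfl fun U _ => ?_
  by_cases hU : ∃ T, IsSSYT lam T ∧ mergeLetters p q T = U
  · obtain ⟨T, hT, rfl⟩ := hU
    rw [sum_mergeLetters_eq_mul_stripSum hlam hpq hT, sum_mergeLetters_eq_mul_stripSum hlam hpq hT,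
      stripSum_comm _ _ _ _ (rowEnd_eq_zero_of_le T _ le_rfl)]
    simp only [Function.comp_apply, Equiv.swap_apply_left, Equiv.swap_apply_right]
    congr 1
    refine prod_congr rfl fun c hc => ?_
    obtain ⟨hp, hq⟩ := not_or.1 (mem_filter.1 hc).2
    rw [Equiv.swap_apply_of_ne_of_ne hp hq]
  · have fiber_empty : (univ.filter (IsSSYT lam)).filter (fun T => mergeLetters p q T = U) = ∅ :=
      filter_eq_empty_iff.2 fun T hT h => hU ⟨T, (mem_filter.1 hT).2, h⟩
    rw [fiber_empty, sum_empty, sum_empty]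

lemma factorialSchur_comp_perm (hlam : IsPartition lam) (σ : Equiv.Perm (Fin n))
    (x : Fin n → R) (y : ℤ → R) :
    factorialSchur lam (x ∘ σ) y = factorialSchur lam x y := by
  cases n with
  | zero => rw [Subsingleton.elim (x ∘ σ) x]
  | succ n =>
    have hσ : σ ∈ Submonoid.closure (Set.range fun i : Fin n => Equiv.swap i.castSucc i.succ) := by
      rw [Equiv.Perm.mclosure_swap_castSucc_succ]
      exact Submonoid.mem_top σ
    induction hσ using Submonoid.closure_induction generalizing x with
    | mem _ hs =>
      obtain ⟨i, rfl⟩ := hs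
      exact factorialSchur_comp_swap hlam (by simp) x y
    | one => rfl
    | mul σ τ _ _ hσ hτ => rw [Equiv.Perm.coe_mul, ← Function.comp_assoc, hτ, hσ]

end Symmetry

section BarredExpansion

variable {n : ℕ} {R : Type*} [CommSemiring R]

/-- The product of the `y`-values of the barred entries of `T`; `cT1` is the case of polynomial
variables. -/
noncomputable def barredWeight {lam : Fin n → ℕ} (T : cells lam → Fin n × Bool) (y : ℤ → R) : R :=
  ∏ c ∈ univ.filter (fun c => (T c).2 = true), y (ysub (T c).1 c)

lemma sum_isBarred_eq {M : Type*} [AddCommMonoid M] (lam : Fin n → ℕ)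
    (f : (cells lam → Fin n × Bool) → M) :
    ∑ T ∈ univ.filter (IsBarred lam), f T =
      ∑ S ∈ univ.filter (IsSSYT lam), ∑ b : cells lam → Bool, f fun c => (S c, b c) := by
  rw [← sum_product']
  refine sum_nbij' (fun T => (fun c => (T c).1, fun c => (T c).2)) (fun P c => (P.1 c, P.2 c))
    ?_ ?_ (fun _ _ => rfl) (fun _ _ => rfl) (fun _ _ => rfl)
  all_goals
    intro T hT
    simp only [mem_product, mem_filter, mem_univ, true_and, and_true] at hT ⊢
    exact hT

lemma prod_unbarred_eq_prod_pow {lam : Fin n → ℕ} (T : cells lam → Fin n × Bool)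
    (x : Fin n → R) :
    ∏ c ∈ univ.filter (fun c => ¬(T c).2 = true), x (T c).1 = ∏ k, x k ^ content1 lam T k := by
  rw [← prod_fiberwise' _ fun c => (T c).1]
  refine prod_congr rfl fun k _ => ?_
  rw [prod_const, content1, filter_filter]
  congr 2
  ext c
  simp [Prod.ext_iff, and_comm]

lemma factorialSchur_eq_sum_isBarred (lam : Fin n → ℕ) (x : Fin n → R) (y : ℤ → R) :
    factorialSchur lam x y =
      ∑ T ∈ univ.filter (IsBarred lam), barredWeight T y * ∏ k, x k ^ content1 lam T k := by
  rw [sum_isBarred_eq, factorialSchur]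
  refine sum_congr rfl fun S _ => ?_
  calc ∏ c : cells lam, (x (S c) + y (ysub (S c) c))
      = ∏ c : cells lam, ∑ b : Bool, if b = true then y (ysub (S c) c) else x (S c) := by
        simp [add_comm]
    _ = ∑ b : cells lam → Bool,
          ∏ c : cells lam, if b c = true then y (ysub (S c) c) else x (S c) :=
        Fintype.prod_sum _
    _ = _ := sum_congr rfl fun b _ => by
        rw [prod_ite, ← prod_unbarred_eq_prod_pow, barredWeight]

lemma prod_factorialSchur_eq_sum_isBarredSkew {r : ℕ} (lam : Fin r → Fin n → ℕ) (x : Fin n → R)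
    (y : Fin r → ℤ → R) :
    ∏ i, factorialSchur (lam i) x (y i) =
      ∑ T ∈ univ.filter (IsBarredSkew lam),
        (∏ i, barredWeight (T i) (y i)) * ∏ k, x k ^ contentT lam T k := by
  simp only [factorialSchur_eq_sum_isBarred]
  rw [prod_univ_sum]
  refine sum_congr ?_ fun T _ => ?_
  · ext T
    simp only [Fintype.mem_piFinset, mem_filter, mem_univ, true_and, IsBarredSkew]
  · rw [prod_mul_distrib, prod_comm]
    simp only [prod_pow_eq_pow_sum, contentT]

lemma rename_cT {r : ℕ} (lam : Fin r → Fin n → ℕ) (T : (i : Fin r) → cells (lam i) → Fin n × Bool) :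
    (rename Sum.inr (cT lam T) : MvPolynomial (Fin n ⊕ Fin r × ℤ) ℤ) =
      ∏ i, barredWeight (T i) fun m => X (Sum.inr (i, m)) := by
  simp only [cT, cT1, barredWeight, map_prod, rename_X]

end BarredExpansion

section Alternants

variable {ι κ R : Type*} [Fintype κ] [DecidableEq κ] [CommRing R]

lemma det_pow_mul_eq_sum {f : R} {s : Finset ι} {w : ι → R} {ω : ι → κ → ℕ} {x : κ → R}
    (hf : ∀ σ : Equiv.Perm κ, f = ∑ t ∈ s, w t * ∏ k, x (σ k) ^ ω t k) (ξ : κ → ℕ) :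
    (Matrix.of fun i j => x i ^ ξ j).det * f =
      ∑ t ∈ s, w t * (Matrix.of fun i j => x i ^ (ξ j + ω t j)).det := by
  simp only [Matrix.det_apply, Matrix.of_apply, sum_mul, mul_sum]
  rw [sum_comm]
  refine sum_congr rfl fun σ _ => ?_
  rw [hf σ, mul_sum]
  refine sum_congr rfl fun t _ => ?_
  simp only [pow_add, prod_mul_distrib, smul_mul_assoc, mul_smul_comm]
  rw [mul_left_comm]

end Alternants

theorem alternant_times_factorial_schur_general {n r : ℕ} {R : Type*} [CommRing R]
    {lam : Fin r → Fin n → ℕ} (hlam : ∀ i, IsPartition (lam i)) (x : Fin n → R)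
    (y : Fin r → ℤ → R) (ξ : Fin n → ℕ) :
    (Matrix.of fun i j => x i ^ ξ j).det * ∏ i, factorialSchur (lam i) x (y i) =
      ∑ T ∈ univ.filter (IsBarredSkew lam), (∏ i, barredWeight (T i) (y i)) *
        (Matrix.of fun i j => x i ^ (ξ j + contentT lam T j)).det := by
  refine det_pow_mul_eq_sum (fun σ => ?_) ξ
  rw [← prod_congr rfl fun i _ => factorialSchur_comp_perm (hlam i) σ x (y i),
    prod_factorialSchur_eq_sum_isBarredSkew]
  rfl

/-- Lemma 3.1: `a_ρ(x) · s_λ̄(x|y) = Σ_{T ∈ B_λ̄} c_T(y) a_{ρ+ω(T)}(x)`. -/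
theorem alternant_times_factorial_schur (n r : ℕ) (hn : 1 ≤ n) (hr : 1 ≤ r)
    (lam : Fin r → Fin n → ℕ) (hlam : ∀ i, IsPartition (lam i)) :
    avand n r (rhoPart n) * ∏ i, factSchur n r i (lam i)
      = ∑ T ∈ Finset.univ.filter
          (fun T : (i : Fin r) → cells (lam i) → Fin n × Bool => IsBarredSkew lam T),
        rename Sum.inr (cT lam T) * avand n r (fun k => rhoPart n k + contentT lam T k) := by
  simp only [rename_cT]
  exact alternant_times_factorial_schur_general hlam (fun k => X (Sum.inl k))
    (fun i m => X (Sum.inr (i, m))) (rhoPart n)
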